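/- arXiv:1906.06930 — 7 statements merged into one kernel-verified Lean document; each statement's English description precedes it below -/
import Mathlib

section
/- For every 0 ≤ t < T, x ∈ ℝ and y > 0, the function Γ² BS := (∂²_{xx} − ∂_x)² BS applied to the Black–Scholes call price has the closed form Γ² BS(t,x,y) = (e^x / (y √(2π τ))) · exp(−d₊²/2) · (d₊² − y d₊ √τ − 1)/(y² τ), where τ = T − t and d₊ = (x − log K + (r + y²/2)τ)/(y√τ). -/
open Real MeasureTheory

/-- Standard normal cumulative distribution function. -/
noncomputable def stdNormalCDF (x : ℝ) : ℝ :=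
  ∫ t in Set.Iic x, (Real.sqrt (2 * Real.pi))⁻¹ * Real.exp (-t ^ 2 / 2)

/-- d₊ in the Black–Scholes formula. -/
noncomputable def dPlus (T K r t x y : ℝ) : ℝ :=
  (x - Real.log K + (r + y ^ 2 / 2) * (T - t)) / (y * Real.sqrt (T - t))

/-- d₋ in the Black–Scholes formula. -/
noncomputable def dMinus (T K r t x y : ℝ) : ℝ :=
  (x - Real.log K + (r - y ^ 2 / 2) * (T - t)) / (y * Real.sqrt (T - t))

/-- Black–Scholes call price with maturity `T`, strike `K`, interest rate `r`,
current time `t`, log spot price `x` and volatility `y`. -/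
noncomputable def BS (T K r t x y : ℝ) : ℝ :=
  Real.exp x * stdNormalCDF (dPlus T K r t x y)
    - K * Real.exp (-r * (T - t)) * stdNormalCDF (dMinus T K r t x y)

/-- The operator Γ := ∂²ₓₓ − ∂ₓ acting on functions of the log spot price. -/
noncomputable def GammaOp (f : ℝ → ℝ) : ℝ → ℝ :=
  fun x => deriv (deriv f) x - deriv f x

theorem stdNormalCDF_hasDerivAt (x : ℝ) :
    HasDerivAt stdNormalCDF ((Real.sqrt (2 * Real.pi))⁻¹ * Real.exp (-x ^ 2 / 2)) x := by
  have hc : Continuous (fun t : ℝ => (Real.sqrt (2 * Real.pi))⁻¹ * Real.exp (-t ^ 2 / 2)) := by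
    fun_prop
  have hi : Integrable (fun t : ℝ => (Real.sqrt (2 * Real.pi))⁻¹ * Real.exp (-t ^ 2 / 2)) := by
    have h := (integrable_exp_neg_mul_sq (b := 1 / 2) (by norm_num)).const_mul
      (Real.sqrt (2 * Real.pi))⁻¹
    refine h.congr (Filter.Eventually.of_forall fun t => ?_)
    dsimp only
    congr 2
    ring
  have heq : stdNormalCDF = fun z => stdNormalCDF 0 +
      ∫ t in (0 : ℝ)..z, (Real.sqrt (2 * Real.pi))⁻¹ * Real.exp (-t ^ 2 / 2) := by
    funext z
    have := intervalIntegral.integral_Iic_sub_Iic (μ := volume) (a := (0 : ℝ)) (b := z)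
      hi.integrableOn hi.integrableOn
    unfold stdNormalCDF
    linarith
  rw [heq]
  exact (intervalIntegral.integral_hasDerivAt_right (hc.intervalIntegrable _ _)
    (hc.stronglyMeasurableAtFilter _ _) hc.continuousAt).const_add _

theorem dPlus_hasDerivAt (T K r t x y : ℝ) :
    HasDerivAt (fun z => dPlus T K r t z y) (1 / (y * Real.sqrt (T - t))) x := by
  unfold dPlus
  exact (((hasDerivAt_id x).sub_const _).add_const _).div_const _

theorem dMinus_hasDerivAt (T K r t x y : ℝ) :
    HasDerivAt (fun z => dMinus T K r t z y) (1 / (y * Real.sqrt (T - t))) x := by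
  unfold dMinus
  exact (((hasDerivAt_id x).sub_const _).add_const _).div_const _

theorem bs_density_identity (T K r t x y : ℝ) (hK : 0 < K) (htT : t < T) (hy : 0 < y) :
    K * Real.exp (-r * (T - t)) * Real.exp (-(dMinus T K r t x y) ^ 2 / 2)
      = Real.exp x * Real.exp (-(dPlus T K r t x y) ^ 2 / 2) := by
  have hτ : 0 < T - t := sub_pos.2 htT
  have hs : 0 < Real.sqrt (T - t) := Real.sqrt_pos.2 hτ
  have hs2 : Real.sqrt (T - t) ^ 2 = T - t := Real.sq_sqrt hτ.le
  nth_rewrite 1 [← Real.exp_log hK]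
  rw [← Real.exp_add, ← Real.exp_add, ← Real.exp_add]
  congr 1
  unfold dMinus dPlus
  rw [div_pow, div_pow, mul_pow, hs2]
  field_simp
  ring

/-- Closed form for Γ BS. -/
noncomputable def gammaBS (T K r t y : ℝ) (z : ℝ) : ℝ :=
  Real.exp z * ((Real.sqrt (2 * Real.pi))⁻¹ * Real.exp (-(dPlus T K r t z y) ^ 2 / 2)
    * (1 / (y * Real.sqrt (T - t))))

theorem bs_hasDerivAt (T K r t x y : ℝ) (hK : 0 < K) (htT : t < T) (hy : 0 < y) :
    HasDerivAt (fun z => BS T K r t z y)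
      (Real.exp x * stdNormalCDF (dPlus T K r t x y)) x := by
  have h1 := (Real.hasDerivAt_exp x).mul
    ((stdNormalCDF_hasDerivAt _).comp x (dPlus_hasDerivAt T K r t x y))
  have h2 := ((stdNormalCDF_hasDerivAt _).comp x (dMinus_hasDerivAt T K r t x y)).const_mul
    (K * Real.exp (-r * (T - t)))
  refine (h1.sub h2).congr_deriv ?_
  have h := bs_density_identity T K r t x y hK htT hy
  simp only [Function.comp]
  linear_combination (-(Real.sqrt (2 * Real.pi))⁻¹ * (1 / (y * Real.sqrt (T - t)))) * h

theorem gamma_bs (T K r t y : ℝ) (hK : 0 < K) (htT : t < T) (hy : 0 < y) :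
    GammaOp (fun z => BS T K r t z y) = gammaBS T K r t y := by
  have h1 : deriv (fun z => BS T K r t z y)
      = fun z => Real.exp z * stdNormalCDF (dPlus T K r t z y) :=
    funext fun z => (bs_hasDerivAt T K r t z y hK htT hy).deriv
  funext z
  have h2 : HasDerivAt (fun z => Real.exp z * stdNormalCDF (dPlus T K r t z y)) _ z :=
    (Real.hasDerivAt_exp z).mul
      ((stdNormalCDF_hasDerivAt _).comp z (dPlus_hasDerivAt T K r t z y))
  unfold GammaOp
  rw [h1, h2.deriv]
  simp only [Function.comp, gammaBS]
  ring

theorem gammaBS_hasDerivAt (T K r t y z : ℝ) :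
    HasDerivAt (gammaBS T K r t y)
      (gammaBS T K r t y z * (1 - dPlus T K r t z y * (1 / (y * Real.sqrt (T - t))))) z := by
  have hd := dPlus_hasDerivAt T K r t z y
  have h := (Real.hasDerivAt_exp z).mul
    ((((((hd.pow 2).neg).div_const 2).exp).const_mul
      (Real.sqrt (2 * Real.pi))⁻¹).mul_const (1 / (y * Real.sqrt (T - t))))
  refine h.congr_deriv ?_
  simp [gammaBS]
  ring

/-- Closed form for Γ² BS = (∂²ₓₓ − ∂ₓ)² BS. -/
theorem gamma_sq_bs (T K r : ℝ) (hT : 0 < T) (hK : 0 < K)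
    (t x y : ℝ) (ht0 : 0 ≤ t) (htT : t < T) (hy : 0 < y) :
    GammaOp (GammaOp (fun x' => BS T K r t x' y)) x
      = Real.exp x / (y * Real.sqrt (2 * Real.pi * (T - t)))
          * Real.exp (-(dPlus T K r t x y) ^ 2 / 2)
          * (((dPlus T K r t x y) ^ 2
              - y * dPlus T K r t x y * Real.sqrt (T - t) - 1)
                / (y ^ 2 * (T - t))) := by
  rw [gamma_bs T K r t y hK htT hy]
  have hτ : 0 < T - t := sub_pos.2 htT
  have hs : 0 < Real.sqrt (T - t) := Real.sqrt_pos.2 hτ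
  have hs2 : Real.sqrt (T - t) ^ 2 = T - t := Real.sq_sqrt hτ.le
  have h1 : deriv (gammaBS T K r t y) = fun z =>
      gammaBS T K r t y z * (1 - dPlus T K r t z y * (1 / (y * Real.sqrt (T - t)))) :=
    funext fun z => (gammaBS_hasDerivAt T K r t y z).deriv
  have h2 : HasDerivAt (fun z =>
      gammaBS T K r t y z * (1 - dPlus T K r t z y * (1 / (y * Real.sqrt (T - t))))) _ x :=
    (gammaBS_hasDerivAt T K r t y x).mul
      (((dPlus_hasDerivAt T K r t x y).mul_const (1 / (y * Real.sqrt (T - t)))).const_sub 1)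
  unfold GammaOp
  rw [h1, h2.deriv]
  simp only [gammaBS]
  have hp : 0 < Real.sqrt (2 * Real.pi) := Real.sqrt_pos.2 (by positivity)
  rw [Real.sqrt_mul (by positivity : (0 : ℝ) ≤ 2 * Real.pi)]
  generalize dPlus T K r t x y = d
  generalize Real.exp (-d ^ 2 / 2) = E
  generalize Real.sqrt (2 * Real.pi) = p at *
  rw [← hs2]
  rw [Real.sqrt_sq hs.le]
  generalize Real.sqrt (T - t) = s at *
  field_simp
  ring
end

section
/- For every 0 ≤ t < T, x ∈ ℝ and w > 0, the derivative of the Black–Scholes call price with respect to the squared volatility satisfies ∂_w [BS(t,x,√w)] = ((T − t)/2) · (∂²_{xx} − ∂_x) BS(t,x,√w). In other words, ∂_{σ²} BS(t,x,σ) = ((T−t)/2)(∂²_x − ∂_x) BS(t,x,σ). -/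
open Real MeasureTheory

/-- Standard normal density. -/
noncomputable def nPdf (t : ℝ) : ℝ := (Real.sqrt (2 * Real.pi))⁻¹ * Real.exp (-t ^ 2 / 2)

lemma nPdf_continuous : Continuous nPdf := by
  unfold nPdf; fun_prop

lemma nPdf_integrable : Integrable nPdf := by
  have h := (integrable_exp_neg_mul_sq (b := 1 / 2) (by norm_num)).const_mul
    (Real.sqrt (2 * Real.pi))⁻¹
  refine h.congr (Filter.Eventually.of_forall fun t => ?_)
  simp only [nPdf]
  congr 2
  ring

lemma cdf_hasDerivAt (x : ℝ) : HasDerivAt stdNormalCDF (nPdf x) x := by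
  have h1 : ∀ y, stdNormalCDF y = stdNormalCDF 0 + ∫ t in (0 : ℝ)..y, nPdf t := by
    intro y
    have := intervalIntegral.integral_Iic_sub_Iic (μ := volume) (f := nPdf) (a := 0) (b := y)
      nPdf_integrable.integrableOn nPdf_integrable.integrableOn
    rw [← this]
    simp [stdNormalCDF, nPdf]
  have h2 : HasDerivAt (fun y => stdNormalCDF 0 + ∫ t in (0 : ℝ)..y, nPdf t) (nPdf x) x :=
    (intervalIntegral.integral_hasDerivAt_right (nPdf_continuous.intervalIntegrable _ _)
      nPdf_continuous.aestronglyMeasurable.stronglyMeasurableAtFilter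
      nPdf_continuous.continuousAt).const_add _
  exact h2.congr_of_eventuallyEq (Filter.Eventually.of_forall h1)

lemma dMinus_eq (T K r t x y : ℝ) (htT : t < T) (hy : 0 < y) :
    dMinus T K r t x y = dPlus T K r t x y - y * Real.sqrt (T - t) := by
  have hs : 0 < Real.sqrt (T - t) := Real.sqrt_pos.2 (by linarith)
  have h2 : Real.sqrt (T - t) ^ 2 = T - t := Real.sq_sqrt (by linarith)
  unfold dMinus dPlus
  rw [← h2]
  simp only [Real.sqrt_sq hs.le]
  field_simp
  ring

/-- The key identity `e^x φ(d₊) = K e^{-rτ} φ(d₋)`. -/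
lemma key_id (T K r t x y : ℝ) (hK : 0 < K) (htT : t < T) (hy : 0 < y) :
    K * Real.exp (-r * (T - t)) * nPdf (dMinus T K r t x y)
      = Real.exp x * nPdf (dPlus T K r t x y) := by
  have hs : 0 < Real.sqrt (T - t) := Real.sqrt_pos.2 (by linarith)
  have h2 : Real.sqrt (T - t) ^ 2 = T - t := Real.sq_sqrt (by linarith)
  have h3 : dPlus T K r t x y * (y * Real.sqrt (T - t))
      = x - Real.log K + (r + y ^ 2 / 2) * (T - t) := by
    unfold dPlus; field_simp
  have h4 : Real.log K + -r * (T - t) + -(dMinus T K r t x y) ^ 2 / 2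
      = x + -(dPlus T K r t x y) ^ 2 / 2 := by
    rw [dMinus_eq T K r t x y htT hy]
    linear_combination h3 - y ^ 2 / 2 * h2
  have h5 := congrArg Real.exp h4
  rw [Real.exp_add, Real.exp_add, Real.exp_add, Real.exp_log hK] at h5
  unfold nPdf
  linear_combination (Real.sqrt (2 * Real.pi))⁻¹ * h5

lemma dPlus_hasDerivAt_x (T K r t x y : ℝ) :
    HasDerivAt (fun x' => dPlus T K r t x' y) (1 / (y * Real.sqrt (T - t))) x := by
  unfold dPlus
  exact (((hasDerivAt_id x).sub_const _).add_const _).div_const _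

lemma dMinus_hasDerivAt_x (T K r t x y : ℝ) :
    HasDerivAt (fun x' => dMinus T K r t x' y) (1 / (y * Real.sqrt (T - t))) x := by
  unfold dMinus
  exact (((hasDerivAt_id x).sub_const _).add_const _).div_const _

lemma BS_hasDerivAt_x (T K r t x y : ℝ) (hK : 0 < K) (htT : t < T) (hy : 0 < y) :
    HasDerivAt (fun x' => BS T K r t x' y)
      (Real.exp x * stdNormalCDF (dPlus T K r t x y)) x := by
  have hp := (cdf_hasDerivAt (dPlus T K r t x y)).comp x (dPlus_hasDerivAt_x T K r t x y)
  have hm := (cdf_hasDerivAt (dMinus T K r t x y)).comp x (dMinus_hasDerivAt_x T K r t x y)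
  have h := ((Real.hasDerivAt_exp x).mul hp).sub (hm.const_mul (K * Real.exp (-r * (T - t))))
  refine HasDerivAt.congr_deriv (f := fun x' => BS T K r t x' y) h ?_
  simp only [Function.comp]
  linear_combination (-(1 / (y * Real.sqrt (T - t)))) * key_id T K r t x y hK htT hy

lemma BS_hasDerivAt_w (T K r t x w : ℝ) (hK : 0 < K) (htT : t < T) (hw : 0 < w) :
    HasDerivAt (fun w' => BS T K r t x (Real.sqrt w'))
      (Real.exp x * nPdf (dPlus T K r t x (Real.sqrt w))
        * (1 / (2 * Real.sqrt w) * Real.sqrt (T - t))) w := by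
  have hs : 0 < Real.sqrt (T - t) := Real.sqrt_pos.2 (by linarith)
  have hy : 0 < Real.sqrt w := Real.sqrt_pos.2 hw
  have hsq := Real.hasDerivAt_sqrt hw.ne'
  have hd : DifferentiableAt ℝ (fun w' => dPlus T K r t x (Real.sqrt w')) w := by
    unfold dPlus
    have hsd := hsq.differentiableAt
    refine DifferentiableAt.div ?_ (hsd.mul_const _) (by positivity)
    exact ((((hsd.pow 2).div_const 2).const_add r).mul_const _).const_add _
  obtain ⟨D, hD⟩ : ∃ D, HasDerivAt (fun w' => dPlus T K r t x (Real.sqrt w')) D w :=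
    ⟨_, hd.hasDerivAt⟩
  have hM : HasDerivAt (fun w' => dMinus T K r t x (Real.sqrt w'))
      (D - 1 / (2 * Real.sqrt w) * Real.sqrt (T - t)) w := by
    refine (hD.sub (hsq.mul_const (Real.sqrt (T - t)))).congr_of_eventuallyEq ?_
    filter_upwards [lt_mem_nhds hw] with v hv
    exact dMinus_eq T K r t x _ htT (Real.sqrt_pos.2 hv)
  have hp := (cdf_hasDerivAt (dPlus T K r t x (Real.sqrt w))).comp w hD
  have hm := (cdf_hasDerivAt (dMinus T K r t x (Real.sqrt w))).comp w hM
  have h := (hp.const_mul (Real.exp x)).sub (hm.const_mul (K * Real.exp (-r * (T - t))))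
  refine HasDerivAt.congr_deriv (f := fun w' => BS T K r t x (Real.sqrt w')) h ?_
  linear_combination (-(D - 1 / (2 * Real.sqrt w) * Real.sqrt (T - t)))
    * key_id T K r t x (Real.sqrt w) hK htT hy

/-- Derivative of the Black–Scholes price with respect to the squared
volatility: ∂_{σ²} BS(t,x,σ) = ((T−t)/2)(∂²ₓ − ∂ₓ) BS(t,x,σ). -/
theorem dsigma_sq_bs (T K r : ℝ) (hT : 0 < T) (hK : 0 < K)
    (t x w : ℝ) (ht0 : 0 ≤ t) (htT : t < T) (hw : 0 < w) :
    deriv (fun w' => BS T K r t x (Real.sqrt w')) w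
      = ((T - t) / 2) * GammaOp (fun x' => BS T K r t x' (Real.sqrt w)) x := by
  have hs : 0 < Real.sqrt (T - t) := Real.sqrt_pos.2 (by linarith)
  have h2 : Real.sqrt (T - t) ^ 2 = T - t := Real.sq_sqrt (by linarith)
  have hy : 0 < Real.sqrt w := Real.sqrt_pos.2 hw
  have h1 : deriv (fun x' => BS T K r t x' (Real.sqrt w))
      = fun x' => Real.exp x' * stdNormalCDF (dPlus T K r t x' (Real.sqrt w)) :=
    funext fun x' => (BS_hasDerivAt_x T K r t x' _ hK htT hy).deriv
  have hp := (cdf_hasDerivAt (dPlus T K r t x (Real.sqrt w))).comp x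
    (dPlus_hasDerivAt_x T K r t x (Real.sqrt w))
  have h3 : deriv (fun x' => Real.exp x' * stdNormalCDF (dPlus T K r t x' (Real.sqrt w))) x
      = _ := ((Real.hasDerivAt_exp x).mul hp).deriv
  rw [(BS_hasDerivAt_w T K r t x w hK htT hw).deriv]
  unfold GammaOp
  rw [h1, h3]
  simp only [Function.comp]
  generalize nPdf (dPlus T K r t x (Real.sqrt w)) = p
  generalize stdNormalCDF (dPlus T K r t x (Real.sqrt w)) = q
  generalize Real.sqrt (T - t) = s at *
  rw [← h2]
  field_simp
  ring
end

section
/- The Black–Scholes call price equals the discounted risk-neutral expectation of the call payoff under a log-normal terminal price: for every 0 ≤ t < T, x ∈ ℝ and y > 0, if Z is a standard normal random variable then e^{−rτ} · E[ ( exp(x + (r − y²/2)τ + y√τ · Z) − K )⁺ ] = BS(t,x,y), where τ = T − t and (·)⁺ denotes the positive part. -/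
open Real MeasureTheory

open ProbabilityTheory

/-- Density of the standard normal law cut off above `a`. -/
noncomputable def cutDensity (a : ℝ) : ℝ → ℝ :=
  (Set.Iic a).indicator fun u => (Real.sqrt (2 * Real.pi))⁻¹ * Real.exp (-u ^ 2 / 2)

lemma integrable_cutDensity (a : ℝ) : Integrable (cutDensity a) := by
  unfold cutDensity
  refine Integrable.indicator ?_ measurableSet_Iic
  refine Integrable.const_mul ?_ _
  have h := integrable_exp_neg_mul_sq (b := 1 / 2) (by norm_num)
  refine h.congr (Filter.Eventually.of_forall fun u => ?_)
  simp only
  congr 1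
  ring

lemma integral_cutDensity (a s : ℝ) : ∫ z, cutDensity a (s - z) = stdNormalCDF a := by
  rw [integral_sub_left_eq_self (cutDensity a) volume s]
  unfold cutDensity stdNormalCDF
  rw [integral_indicator measurableSet_Iic]

lemma payoff_decomp (m s K d z : ℝ) (hK : 0 < K) (hs : 0 < s)
    (hd : s * d = m - Real.log K) :
    gaussianPDFReal 0 1 z * max (Real.exp (m + s * z) - K) 0
      = Real.exp (m + s ^ 2 / 2) * cutDensity (d + s) (s - z) - K * cutDensity d (0 - z) := by
  have hg : gaussianPDFReal 0 1 z = (Real.sqrt (2 * Real.pi))⁻¹ * Real.exp (-z ^ 2 / 2) := by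
    simp [gaussianPDFReal]
  have hiff : K ≤ Real.exp (m + s * z) ↔ -d ≤ z := by
    rw [← Real.log_le_iff_le_exp hK]
    constructor
    · intro h
      have : 0 ≤ s * (z + d) := by linarith
      have := nonneg_of_mul_nonneg_right this hs
      linarith
    · intro h
      have : 0 ≤ s * (z + d) := mul_nonneg hs.le (by linarith)
      linarith
  rw [hg]
  unfold cutDensity
  by_cases h : -d ≤ z
  · have h1 : s - z ∈ Set.Iic (d + s) := by simp only [Set.mem_Iic]; linarith
    have h2 : 0 - z ∈ Set.Iic d := by simp only [Set.mem_Iic]; linarith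
    rw [Set.indicator_of_mem h1, Set.indicator_of_mem h2,
      max_eq_left (sub_nonneg.2 (hiff.2 h))]
    have e : Real.exp (-z ^ 2 / 2) * Real.exp (m + s * z)
        = Real.exp (m + s ^ 2 / 2) * Real.exp (-(s - z) ^ 2 / 2) := by
      rw [← Real.exp_add, ← Real.exp_add]
      congr 1
      ring
    have e2 : (-(0 - z) ^ 2 / 2 : ℝ) = -z ^ 2 / 2 := by ring
    rw [e2]
    linear_combination (Real.sqrt (2 * Real.pi))⁻¹ * e
  · have h1 : s - z ∉ Set.Iic (d + s) := by simp only [Set.mem_Iic]; intro; apply h; linarith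
    have h2 : 0 - z ∉ Set.Iic d := by simp only [Set.mem_Iic]; intro; apply h; linarith
    rw [Set.indicator_of_notMem h1, Set.indicator_of_notMem h2, max_eq_right]
    · ring
    · have := mt hiff.1 h
      linarith

/-- The Black–Scholes call price is the discounted risk-neutral expectation of
the call payoff under a log-normal terminal price. -/
theorem bs_as_expectation (T K r : ℝ) (hT : 0 < T) (hK : 0 < K)
    (t x y : ℝ) (ht0 : 0 ≤ t) (htT : t < T) (hy : 0 < y)
    {Ω : Type*} [MeasurableSpace Ω] (μ : Measure Ω) [IsProbabilityMeasure μ]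
    (Z : Ω → ℝ) (hZ : Measurable Z)
    (hZlaw : Measure.map Z μ = gaussianReal 0 1) :
    Real.exp (-r * (T - t)) *
        ∫ ω, max (Real.exp (x + (r - y ^ 2 / 2) * (T - t)
            + y * Real.sqrt (T - t) * Z ω) - K) 0 ∂μ
      = BS T K r t x y := by
  have hτ : 0 < T - t := sub_pos.2 htT
  have hq : 0 < Real.sqrt (T - t) := Real.sqrt_pos.2 hτ
  have hq2 : Real.sqrt (T - t) ^ 2 = T - t := Real.sq_sqrt hτ.le
  set s := y * Real.sqrt (T - t) with hs_def
  have hs : 0 < s := mul_pos hy hq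
  have hs2 : s ^ 2 = y ^ 2 * (T - t) := by rw [hs_def, mul_pow, hq2]
  set m := x + (r - y ^ 2 / 2) * (T - t) with hm
  have hd : s * dMinus T K r t x y = m - Real.log K := by
    unfold dMinus
    rw [← hs_def, mul_div_cancel₀ _ hs.ne']
    ring
  have hdp : dPlus T K r t x y = dMinus T K r t x y + s := by
    unfold dPlus dMinus
    rw [← hs_def]
    field_simp
    rw [hs2]
    ring
  have hmap : ∫ ω, max (Real.exp (m + s * Z ω) - K) 0 ∂μ
      = ∫ z, max (Real.exp (m + s * z) - K) 0 ∂(gaussianReal 0 1) := by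
    rw [← hZlaw, integral_map hZ.aemeasurable]
    exact Continuous.aestronglyMeasurable (by fun_prop)
  rw [hmap, integral_gaussianReal_eq_integral_smul one_ne_zero]
  simp only [smul_eq_mul, payoff_decomp m s K _ _ hK hs hd]
  rw [integral_sub (((integrable_cutDensity _).comp_sub_left s).const_mul _)
      (((integrable_cutDensity _).comp_sub_left 0).const_mul _),
    integral_const_mul, integral_const_mul, integral_cutDensity, integral_cutDensity, ← hdp]
  have he : Real.exp (-r * (T - t)) * Real.exp (m + s ^ 2 / 2) = Real.exp x := by
    rw [← Real.exp_add, hs2, hm]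
    congr 1
    ring
  unfold BS
  linear_combination stdNormalCDF (dPlus T K r t x y) * he
end

section
/- Gaussian mixing identity for the Black–Scholes price (the identity underlying the closed formula for G_n in the Bates log-normal jump model): for every x ∈ ℝ, v > 0, m ∈ ℝ and s > 0, the integral of BS(0, x+z, v) against the Gaussian density with mean m and variance s² equals a Black–Scholes price with shifted log-price and enlarged volatility: ∫_ℝ BS(0, x + z, v) · (1/(s√(2π))) exp(−(z−m)²/(2s²)) dz = BS(0, x + m + s²/2, √(v² + s²/T)). In particular, taking m = n μ_J and s² = n σ_J², the function G_n(0,x,v) := E[BS(0, x + J_n, v)] with J_n ∼ N(n μ_J, n σ_J²) equals BS(0, x + n μ_J + n σ_J²/2, √(v² + n σ_J²/T)). -/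
open Real MeasureTheory

open ProbabilityTheory

open scoped NNReal ENNReal

lemma aux_cdf_eq (w : ℝ) : stdNormalCDF w = (gaussianReal 0 1).real (Set.Iic w) := by
  rw [measureReal_def, gaussianReal_apply_eq_integral 0 one_ne_zero, ENNReal.toReal_ofReal]
  · unfold stdNormalCDF gaussianPDFReal
    simp
  · exact integral_nonneg fun t => gaussianPDFReal_nonneg _ _ _

lemma aux_cdf_scale (b : ℝ≥0) (hb : 0 < b) (c : ℝ) :
    gaussianReal 0 (b ^ 2) (Set.Iic c) = ENNReal.ofReal (stdNormalCDF (c / b)) := by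
  have hb' : (0 : ℝ) < b := hb
  rw [aux_cdf_eq, measureReal_def, ENNReal.ofReal_toReal (measure_ne_top _ _)]
  have h := gaussianReal_map_const_mul (μ := 0) (v := 1) (b : ℝ)
  have h2 : gaussianReal 0 (b ^ 2) = (gaussianReal 0 1).map ((b : ℝ) * ·) := by
    rw [h]; congr 1
    · simp
    · ext; simp
  rw [h2, Measure.map_apply (by fun_prop) measurableSet_Iic]
  congr 1
  ext t
  simp only [Set.mem_preimage, Set.mem_Iic]
  rw [le_div_iff₀ hb', mul_comm]

lemma aux_cdf_nonneg (w : ℝ) : 0 ≤ stdNormalCDF w := by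
  rw [aux_cdf_eq]; exact measureReal_nonneg

lemma aux_cdf_le_one (w : ℝ) : stdNormalCDF w ≤ 1 := by
  rw [aux_cdf_eq]; exact measureReal_le_one

lemma aux_cdf_meas : Measurable stdNormalCDF := by
  apply Monotone.measurable
  intro a b hab
  rw [aux_cdf_eq, aux_cdf_eq]
  exact measureReal_mono (Set.Iic_subset_Iic.2 hab)

lemma aux_mix (a b m s : ℝ) (hb : 0 < b) (hs : 0 < s) :
    ∫ z, stdNormalCDF ((a + z) / b) ∂(gaussianReal m (s.toNNReal ^ 2))
      = stdNormalCDF ((a + m) / √(b ^ 2 + s ^ 2)) := by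
  have hm : Measurable fun z : ℝ => stdNormalCDF ((a + z) / b) :=
    aux_cdf_meas.comp (by fun_prop)
  rw [integral_eq_lintegral_of_nonneg_ae (Filter.Eventually.of_forall fun z => aux_cdf_nonneg _)
    hm.aestronglyMeasurable]
  set S : ℝ≥0 := s.toNNReal with hS
  set B : ℝ≥0 := b.toNNReal with hB
  have hBp : 0 < B := Real.toNNReal_pos.2 hb
  have hSc : (S : ℝ) = s := Real.coe_toNNReal _ hs.le
  have hBc : (B : ℝ) = b := Real.coe_toNNReal _ hb.le
  have hsum : 0 < b ^ 2 + s ^ 2 := by positivity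
  set C : ℝ≥0 := (√(b ^ 2 + s ^ 2)).toNNReal with hC
  have hCp : 0 < C := Real.toNNReal_pos.2 (Real.sqrt_pos.2 hsum)
  have hCc : (C : ℝ) = √(b ^ 2 + s ^ 2) := Real.coe_toNNReal _ (Real.sqrt_nonneg _)
  have hC2 : C ^ 2 = S ^ 2 + B ^ 2 := by
    ext
    simp only [NNReal.coe_pow, NNReal.coe_add, hCc, hSc, hBc]
    rw [Real.sq_sqrt hsum.le]; ring
  have key : ∫⁻ z, ENNReal.ofReal (stdNormalCDF ((a + z) / b)) ∂(gaussianReal m (S ^ 2))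
      = ENNReal.ofReal (stdNormalCDF ((a + m) / C)) := by
    rw [← aux_cdf_scale C hCp, hC2]
    have e1 : gaussianReal 0 (S ^ 2 + B ^ 2) (Set.Iic (a + m))
        = gaussianReal (-m) (S ^ 2 + B ^ 2) (Set.Iic a) := by
      have h := gaussianReal_map_add_const (μ := -m) (v := S ^ 2 + B ^ 2) m
      rw [neg_add_cancel] at h
      rw [← h, Measure.map_apply (by fun_prop) measurableSet_Iic]
      congr 1
      ext t; simp
    rw [e1]
    have e2 := gaussianReal_conv_gaussianReal (m₁ := -m) (m₂ := 0) (v₁ := S ^ 2) (v₂ := B ^ 2)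
    rw [add_zero] at e2
    rw [← e2, ← lintegral_indicator_one measurableSet_Iic, Measure.lintegral_conv
      (measurable_one.indicator measurableSet_Iic), ← gaussianReal_map_neg,
      lintegral_map _ measurable_neg]
    · refine lintegral_congr fun z => ?_
      have : ENNReal.ofReal (stdNormalCDF ((a + z) / b)) =
        gaussianReal 0 (B ^ 2) (Set.Iic (a + z)) := by
        rw [aux_cdf_scale B hBp (a + z), hBc]
      rw [this, ← lintegral_indicator_one measurableSet_Iic]
      refine lintegral_congr fun t => ?_
      have : t ∈ Set.Iic (a + z) ↔ -z + t ∈ Set.Iic a := by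
        simp only [Set.mem_Iic]; constructor <;> intro h <;> linarith
      by_cases h : t ∈ Set.Iic (a + z)
      · rw [Set.indicator_of_mem h, Set.indicator_of_mem (this.1 h)]; rfl
      · rw [Set.indicator_of_notMem h, Set.indicator_of_notMem (fun h' => h (this.2 h'))]
    · apply Measurable.lintegral_prod_right'
        (f := fun p : ℝ × ℝ => (Set.Iic a).indicator (1 : ℝ → ℝ≥0∞) (p.1 + p.2))
      exact (measurable_one.indicator measurableSet_Iic).comp (by fun_prop)
  rw [key, ENNReal.toReal_ofReal (aux_cdf_nonneg _), hCc]

lemma aux_pdf (m s z : ℝ) (hs : 0 < s) : gaussianPDFReal m (s.toNNReal ^ 2) z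
    = 1 / (s * √(2 * π)) * rexp (-(z - m) ^ 2 / (2 * s ^ 2)) := by
  unfold gaussianPDFReal
  rw [NNReal.coe_pow, Real.coe_toNNReal _ hs.le]
  rw [Real.sqrt_mul (by positivity), Real.sqrt_sq hs.le, one_div, mul_comm s]

lemma aux_mix2 (a b m s : ℝ) (hb : 0 < b) (hs : 0 < s) :
    Integrable (fun z => stdNormalCDF ((a + z) / b) *
      (1 / (s * √(2 * π)) * rexp (-(z - m) ^ 2 / (2 * s ^ 2)))) ∧
    ∫ z, stdNormalCDF ((a + z) / b) *
      (1 / (s * √(2 * π)) * rexp (-(z - m) ^ 2 / (2 * s ^ 2)))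
      = stdNormalCDF ((a + m) / √(b ^ 2 + s ^ 2)) := by
  have hm : Measurable fun z : ℝ => stdNormalCDF ((a + z) / b) :=
    aux_cdf_meas.comp (by fun_prop)
  have hne : s.toNNReal ^ 2 ≠ 0 := pow_ne_zero _ (Real.toNNReal_pos.2 hs).ne'
  simp_rw [← aux_pdf m s _ hs]
  constructor
  · refine (integrable_gaussianPDFReal m _).bdd_mul (c := 1) hm.aestronglyMeasurable ?_
    refine Filter.Eventually.of_forall fun z => ?_
    rw [Real.norm_of_nonneg (aux_cdf_nonneg _)]
    exact aux_cdf_le_one _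
  · rw [← aux_mix a b m s hb hs, integral_gaussianReal_eq_integral_smul hne]
    simp only [smul_eq_mul, mul_comm]

/-- Gaussian mixing identity for the Black–Scholes price: integrating the
price against a Gaussian density in the log-price shifts the log-price and
enlarges the volatility. -/
theorem gaussian_mixing_bs (T K r : ℝ) (hT : 0 < T) (hK : 0 < K)
    (x v m s : ℝ) (hv : 0 < v) (hs : 0 < s) :
    ∫ z : ℝ, BS T K r 0 (x + z) v
        * (1 / (s * Real.sqrt (2 * Real.pi)) * Real.exp (-(z - m) ^ 2 / (2 * s ^ 2)))
      = BS T K r 0 (x + m + s ^ 2 / 2) (Real.sqrt (v ^ 2 + s ^ 2 / T)) := by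
  have hsT : 0 < √T := Real.sqrt_pos.2 hT
  have hb : 0 < v * √T := by positivity
  obtain ⟨i1, h1⟩ := aux_mix2 (x - log K + (r + v ^ 2 / 2) * T) (v * √T) (m + s ^ 2) s hb hs
  obtain ⟨i2, h2⟩ := aux_mix2 (x - log K + (r - v ^ 2 / 2) * T) (v * √T) m s hb hs
  have hsq : √((v * √T) ^ 2 + s ^ 2) = √(v ^ 2 + s ^ 2 / T) * √T := by
    rw [← Real.sqrt_mul (by positivity), mul_pow, Real.sq_sqrt hT.le]
    congr 1
    field_simp
  have hpt : ∀ z : ℝ, BS T K r 0 (x + z) v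
        * (1 / (s * √(2 * π)) * rexp (-(z - m) ^ 2 / (2 * s ^ 2)))
      = rexp (x + m + s ^ 2 / 2) *
          (stdNormalCDF ((x - log K + (r + v ^ 2 / 2) * T + z) / (v * √T)) *
            (1 / (s * √(2 * π)) * rexp (-(z - (m + s ^ 2)) ^ 2 / (2 * s ^ 2))))
        - K * rexp (-r * T) *
          (stdNormalCDF ((x - log K + (r - v ^ 2 / 2) * T + z) / (v * √T)) *
            (1 / (s * √(2 * π)) * rexp (-(z - m) ^ 2 / (2 * s ^ 2)))) := by
    intro z
    have he : rexp (x + z) * rexp (-(z - m) ^ 2 / (2 * s ^ 2))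
        = rexp (x + m + s ^ 2 / 2) * rexp (-(z - (m + s ^ 2)) ^ 2 / (2 * s ^ 2)) := by
      rw [← Real.exp_add, ← Real.exp_add]
      congr 1
      field_simp
      ring
    unfold BS dPlus dMinus
    rw [sub_zero, show x + z - log K + (r + v ^ 2 / 2) * T
      = x - log K + (r + v ^ 2 / 2) * T + z by ring,
      show x + z - log K + (r - v ^ 2 / 2) * T
      = x - log K + (r - v ^ 2 / 2) * T + z by ring]
    linear_combination (stdNormalCDF ((x - log K + (r + v ^ 2 / 2) * T + z) / (v * √T)) *
      (1 / (s * √(2 * π)))) * he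
  simp_rw [hpt]
  rw [integral_sub (i1.const_mul _) (i2.const_mul _), integral_const_mul, integral_const_mul,
    h1, h2, hsq]
  unfold BS dPlus dMinus
  rw [sub_zero, Real.sq_sqrt (by positivity)]
  have ha : x - log K + (r + v ^ 2 / 2) * T + (m + s ^ 2)
      = x + m + s ^ 2 / 2 - log K + (r + (v ^ 2 + s ^ 2 / T) / 2) * T := by
    field_simp
    ring
  have hc : x - log K + (r - v ^ 2 / 2) * T + m
      = x + m + s ^ 2 / 2 - log K + (r - (v ^ 2 + s ^ 2 / T) / 2) * T := by
    field_simp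
    ring
  rw [ha, hc]
end

section
/- N-fold convolution of the Kou double-exponential density: let p, q ≥ 0 with p + q = 1 and η₁, η₂ > 0, and let f(y) = p η₁ e^{−η₁ y} 1_{y ≥ 0} + q η₂ e^{η₂ y} 1_{y < 0}. Then for every n ≥ 1 the n-fold convolution f^{*n} satisfies, for almost every u ∈ ℝ, f^{*n}(u) = e^{−η₁ u} Σ_{k=1}^{n} P_{n,k} η₁^{k} u^{k−1}/(k−1)! · 1_{u ≥ 0} + e^{η₂ u} Σ_{k=1}^{n} Q_{n,k} η₂^{k} (−u)^{k−1}/(k−1)! · 1_{u < 0}, where for 1 ≤ k ≤ n−1, P_{n,k} = Σ_{i=k}^{n−1} C(n−k−1, i−k) C(n, i) (η₁/(η₁+η₂))^{i−k} (η₂/(η₁+η₂))^{n−i} p^{i} q^{n−i} and Q_{n,k} = Σ_{i=k}^{n−1} C(n−k−1, i−k) C(n, i) (η₁/(η₁+η₂))^{n−i} (η₂/(η₁+η₂))^{i−k} p^{n−i} q^{i}, while P_{n,n} = pⁿ and Q_{n,n} = qⁿ. -/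
open Real MeasureTheory

/-- Convolution of two real functions. -/
noncomputable def conv (f g : ℝ → ℝ) (u : ℝ) : ℝ := ∫ y, f (u - y) * g y

/-- `convPow f n` is the n-fold convolution f^{*n} (for n ≥ 1);
the value at n = 0 is irrelevant and set to f. -/
noncomputable def convPow (f : ℝ → ℝ) : ℕ → ℝ → ℝ
  | 0 => f
  | 1 => f
  | n + 2 => conv (convPow f (n + 1)) f

/-- The Kou double-exponential jump-size density. -/
noncomputable def kouDensity (p q η₁ η₂ : ℝ) (y : ℝ) : ℝ :=
  if 0 ≤ y then p * η₁ * Real.exp (-η₁ * y) else q * η₂ * Real.exp (η₂ * y)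

/-- The coefficients P_{n,k} in the n-fold convolution of the Kou density. -/
noncomputable def kouP (p q η₁ η₂ : ℝ) (n k : ℕ) : ℝ :=
  if k = n then p ^ n
  else ∑ i ∈ Finset.Icc k (n - 1),
    ((n - k - 1).choose (i - k) : ℝ) * (n.choose i : ℝ)
      * (η₁ / (η₁ + η₂)) ^ (i - k) * (η₂ / (η₁ + η₂)) ^ (n - i)
      * p ^ i * q ^ (n - i)

/-- The coefficients Q_{n,k} in the n-fold convolution of the Kou density. -/
noncomputable def kouQ (p q η₁ η₂ : ℝ) (n k : ℕ) : ℝ :=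
  if k = n then q ^ n
  else ∑ i ∈ Finset.Icc k (n - 1),
    ((n - k - 1).choose (i - k) : ℝ) * (n.choose i : ℝ)
      * (η₁ / (η₁ + η₂)) ^ (n - i) * (η₂ / (η₁ + η₂)) ^ (i - k)
      * p ^ (n - i) * q ^ i

namespace Kou

/-- Gamma-type density on the positive half line. -/
noncomputable def E (η : ℝ) (k : ℕ) (u : ℝ) : ℝ :=
  if 0 ≤ u then η ^ (k + 1) * u ^ k / k.factorial * Real.exp (-η * u) else 0

/-- Reflected density. -/
noncomputable def F (η : ℝ) (k : ℕ) (u : ℝ) : ℝ := E η k (-u)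

lemma intOn (s : ℝ) (hs : 0 < s) (k : ℕ) (c : ℝ) (hc : 0 ≤ c) :
    IntegrableOn (fun v : ℝ => v ^ k * Real.exp (-s * v)) (Set.Ioi c) := by
  have h := integrableOn_rpow_mul_exp_neg_mul_rpow (p := 1) (s := k) (b := s)
    (by have : (0:ℝ) ≤ k := Nat.cast_nonneg k
        linarith) one_pos hs
  simp only [Real.rpow_natCast, Real.rpow_one] at h
  exact h.mono_set (Set.Ioi_subset_Ioi hc)

lemma tend (s : ℝ) (hs : 0 < s) (k : ℕ) :
    Filter.Tendsto (fun v : ℝ => v ^ k * Real.exp (-s * v)) Filter.atTop (nhds 0) := by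
  simpa using tendsto_rpow_mul_exp_neg_mul_atTop_nhds_zero k s hs

/-- Incomplete gamma integral. -/
noncomputable def J (s c : ℝ) (k : ℕ) : ℝ := ∫ v in Set.Ioi c, v ^ k * Real.exp (-s * v)

lemma J_zero (s c : ℝ) (hs : 0 < s) : s * J s c 0 = Real.exp (-s * c) := by
  have := integral_exp_mul_Ioi (a := -s) (by linarith) c
  simp only [J, pow_zero, one_mul]
  rw [this]; field_simp

lemma J_succ (s c : ℝ) (hs : 0 < s) (hc : 0 ≤ c) (k : ℕ) :
    s * J s c (k + 1) = c ^ (k + 1) * Real.exp (-s * c) + (k + 1) * J s c k := by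
  have h1 := intOn s hs (k + 1) c hc
  have h0 := intOn s hs k c hc
  have key := integral_Ioi_of_hasDerivAt_of_tendsto' (a := c)
    (f := fun v : ℝ => v ^ (k + 1) * Real.exp (-s * v))
    (f' := fun v : ℝ => (k + 1) * (v ^ k * Real.exp (-s * v))
        - s * (v ^ (k + 1) * Real.exp (-s * v))) (m := 0)
    (fun x _ => by
      have e1 : HasDerivAt (fun v : ℝ => v ^ (k + 1)) ((k + 1 : ℕ) * x ^ k) x := by
        simpa using hasDerivAt_pow (k + 1) x
      have e2 : HasDerivAt (fun v : ℝ => Real.exp (-s * v)) (Real.exp (-s * x) * (-s)) x := by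
        simpa using ((hasDerivAt_id x).const_mul (-s)).exp
      refine (e1.mul e2).congr_deriv ?_
      push_cast; ring)
    ((h0.const_mul _).sub (h1.const_mul _)) (tend s hs (k + 1))
  rw [integral_sub (h0.const_mul _) (h1.const_mul _), integral_const_mul, integral_const_mul] at key
  simp only [J]
  linarith

lemma E_integrable (η : ℝ) (h : 0 < η) (k : ℕ) : Integrable (E η k) := by
  have h0 := (intOn η h k 0 le_rfl).const_mul (η ^ (k + 1) / k.factorial)
  have h1 : IntegrableOn (fun v : ℝ => η ^ (k + 1) / k.factorial * (v ^ k * Real.exp (-η * v)))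
    (Set.Ici 0) := (integrableOn_Ici_iff_integrableOn_Ioi enorm_ne_top).2 h0
  rw [← integrable_indicator_iff measurableSet_Ici] at h1
  refine h1.congr (Filter.Eventually.of_forall fun x => ?_)
  simp only [Set.indicator, Set.mem_Ici, E]
  split_ifs
  · ring
  · rfl

lemma F_integrable (η : ℝ) (h : 0 < η) (k : ℕ) : Integrable (F η k) :=
  (E_integrable η h k).comp_neg

lemma conv_EF (η θ : ℝ) (k : ℕ) (u : ℝ) :
    conv (E η k) (F θ 0) u =
      η ^ (k + 1) / k.factorial * θ * Real.exp (θ * u) * J (η + θ) (max u 0) k := by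
  have h1 : conv (E η k) (F θ 0) u = ∫ v, E η k v * E θ 0 (v - u) := by
    rw [← integral_sub_left_eq_self (fun v => E η k v * E θ 0 (v - u)) volume u]
    simp only [conv, F]
    congr 1; ext y; congr 2; ring
  have h2 : (fun v => E η k v * E θ 0 (v - u)) = (Set.Ici (max u 0)).indicator
      (fun v => η ^ (k + 1) / k.factorial * θ * Real.exp (θ * u)
        * (v ^ k * Real.exp (-(η + θ) * v))) := by
    ext v
    simp only [Set.indicator, Set.mem_Ici, E, max_le_iff, sub_nonneg]
    by_cases hu : u ≤ v <;> by_cases hv : 0 ≤ v <;> simp only [hu, hv, if_true, if_false, and_true,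
      and_false, and_self, mul_zero, zero_mul]
    have : Real.exp (-(η + θ) * v) * Real.exp (θ * u)
        = Real.exp (-η * v) * Real.exp (-θ * (v - u)) := by
      rw [← Real.exp_add, ← Real.exp_add]; congr 1; ring
    simp only [zero_add, pow_one, pow_zero, mul_one, Nat.factorial_zero, Nat.cast_one, div_one]
    linear_combination (-(η ^ (k + 1) / k.factorial * θ * v ^ k)) * this
  rw [h1, h2, integral_indicator measurableSet_Ici, integral_Ici_eq_integral_Ioi,
    integral_const_mul, J]

lemma conv_EF_zero (η θ : ℝ) (h1 : 0 < η) (h2 : 0 < θ) :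
    conv (E η 0) (F θ 0) =ᵐ[volume]
      fun u => θ / (η + θ) * E η 0 u + η / (η + θ) * F θ 0 u := by
  have hs : 0 < η + θ := by linarith
  have h0 : ∀ᵐ u : ℝ, u ≠ 0 := by simp [ae_iff]
  filter_upwards [h0] with u hu
  have hJ := J_zero (η + θ) (max u 0) hs
  have hJ' : J (η + θ) (max u 0) 0 = Real.exp (-(η + θ) * max u 0) / (η + θ) := by
    rw [eq_div_iff hs.ne.symm]; linarith
  rw [conv_EF, hJ']
  simp only [F, E]
  rcases lt_or_gt_of_ne hu with h | h
  · have a1 : ¬ (0 ≤ u) := by linarith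
    have a2 : 0 ≤ -u := by linarith
    simp only [a1, a2, if_true, if_false, max_eq_right h.le]
    simp; ring
  · have a1 : 0 ≤ u := by linarith
    have a2 : ¬ (0 ≤ -u) := by linarith
    simp only [a1, a2, if_true, if_false, max_eq_left h.le]
    have : Real.exp (-η * u) = Real.exp (θ * u) * Real.exp (-(η + θ) * u) := by
      rw [← Real.exp_add]; congr 1; ring
    rw [this]; simp; ring

lemma conv_EF_succ (η θ : ℝ) (h1 : 0 < η) (h2 : 0 < θ) (k : ℕ) (u : ℝ) :
    conv (E η (k + 1)) (F θ 0) u =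
      θ / (η + θ) * E η (k + 1) u + η / (η + θ) * conv (E η k) (F θ 0) u := by
  have hs : 0 < η + θ := by linarith
  have hJ := J_succ (η + θ) (max u 0) hs (le_max_right _ _) k
  have hJ' : J (η + θ) (max u 0) (k + 1) = (max u 0 ^ (k + 1) * Real.exp (-(η + θ) * max u 0)
    + (k + 1) * J (η + θ) (max u 0) k) / (η + θ) := by
    rw [eq_div_iff hs.ne.symm]; linarith
  have hk : ((k + 1).factorial : ℝ) = (k + 1) * k.factorial := by
    rw [Nat.factorial_succ]; push_cast; ring
  have hk1 : (k : ℝ) + 1 ≠ 0 := by positivity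
  have hk2 : (k.factorial : ℝ) ≠ 0 := by positivity
  rw [conv_EF, conv_EF, hJ', hk]
  simp only [E, hk]
  by_cases h : 0 ≤ u
  · simp only [h, if_true, max_eq_left h]
    have : Real.exp (-η * u) = Real.exp (θ * u) * Real.exp (-(η + θ) * u) := by
      rw [← Real.exp_add]; congr 1; ring
    rw [this]; field_simp; ring
  · simp only [h, if_false, max_eq_right (not_le.1 h).le]
    simp; field_simp; ring

lemma conv_EE (η : ℝ) (k : ℕ) (u : ℝ) :
    conv (E η k) (E η 0) u = E η (k + 1) u := by
  have h2 : (fun y => E η k (u - y) * E η 0 y) = (Set.Icc 0 u).indicator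
      (fun y => η ^ (k + 2) / k.factorial * Real.exp (-η * u) * (u - y) ^ k) := by
    ext y
    simp only [Set.indicator, Set.mem_Icc, E, sub_nonneg]
    by_cases hu : y ≤ u <;> by_cases hv : 0 ≤ y <;> simp only [hu, hv, if_true, if_false, and_true,
      and_false, and_self, mul_zero, zero_mul]
    have : Real.exp (-η * u)
        = Real.exp (-η * (u - y)) * Real.exp (-η * y) := by
      rw [← Real.exp_add]; congr 1; ring
    rw [this]
    simp only [zero_add, pow_one, pow_zero, mul_one, Nat.factorial_zero, Nat.cast_one, div_one]
    ring
  rw [conv, h2, integral_indicator measurableSet_Icc, integral_Icc_eq_integral_Ioc]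
  by_cases h : 0 ≤ u
  · rw [← intervalIntegral.integral_of_le h, intervalIntegral.integral_const_mul,
      intervalIntegral.integral_comp_sub_left (fun x => x ^ k) u]
    simp only [sub_self, sub_zero, integral_pow, E, h, if_true]
    have hk : ((k + 1).factorial : ℝ) = (k + 1) * k.factorial := by
      rw [Nat.factorial_succ]; push_cast; ring
    rw [hk]
    have hk1 : (k : ℝ) + 1 ≠ 0 := by positivity
    have hk2 : (k.factorial : ℝ) ≠ 0 := by positivity
    field_simp; simp
  · rw [Set.Ioc_eq_empty (by linarith)]
    simp [E, h]

lemma conv_neg (f g : ℝ → ℝ) (u : ℝ) :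
    conv (fun x => f (-x)) (fun x => g (-x)) u = conv f g (-u) := by
  simp only [conv]
  rw [← integral_neg_eq_self]
  congr 1; ext y; congr 2 <;> ring_nf

lemma ae_neg {f g : ℝ → ℝ} (h : f =ᵐ[volume] g) :
    (fun x => f (-x)) =ᵐ[volume] (fun x => g (-x)) :=
  (Measure.measurePreserving_neg (volume : Measure ℝ)).quasiMeasurePreserving.ae_eq_comp h

lemma conv_congr {f f' g g' : ℝ → ℝ} (h : f =ᵐ[volume] f') (h' : g =ᵐ[volume] g') (u : ℝ) :
    conv f g u = conv f' g' u := by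
  have := (quasiMeasurePreserving_sub_left_of_right_invariant (volume : Measure ℝ) u).ae_eq_comp h
  apply integral_congr_ae
  filter_upwards [this, h'] with y h1 h2
  simp only [Function.comp] at h1
  rw [h1, h2]

lemma conv_ex {f g : ℝ → ℝ} (hf : Integrable f) (hg : Integrable g) :
    ∀ᵐ u : ℝ, Integrable (fun y => f (u - y) * g y) := by
  have := hg.ae_convolution_exists (ContinuousLinearMap.mul ℝ ℝ) hf
  filter_upwards [this] with u hu
  refine hu.congr (Filter.Eventually.of_forall fun y => ?_)
  simp [mul_comm]

lemma conv_lin_right {f g h : ℝ → ℝ} (hf : Integrable f) (hg : Integrable g) (hh : Integrable h)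
    (c d : ℝ) : conv f (fun x => c * g x + d * h x) =ᵐ[volume]
      fun u => c * conv f g u + d * conv f h u := by
  filter_upwards [conv_ex hf hg, conv_ex hf hh] with u h1 h2
  simp only [conv]
  rw [← integral_const_mul, ← integral_const_mul,
    ← integral_add (h1.const_mul c) (h2.const_mul d)]
  congr 1; ext y; ring

lemma conv_lin_left {f g h : ℝ → ℝ} (hf : Integrable f) (hg : Integrable g) (hh : Integrable h)
    (c d : ℝ) : conv (fun x => c * g x + d * h x) f =ᵐ[volume]
      fun u => c * conv g f u + d * conv h f u := by
  filter_upwards [conv_ex hg hf, conv_ex hh hf] with u h1 h2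
  simp only [conv]
  rw [← integral_const_mul, ← integral_const_mul,
    ← integral_add (h1.const_mul c) (h2.const_mul d)]
  congr 1; ext y; ring

lemma conv_sum_left {ι : Type*} {f : ℝ → ℝ} (hf : Integrable f) (s : Finset ι) (c : ι → ℝ)
    (g : ι → ℝ → ℝ) (hg : ∀ i, Integrable (g i)) :
    conv (fun x => ∑ i ∈ s, c i * g i x) f =ᵐ[volume]
      fun u => ∑ i ∈ s, c i * conv (g i) f u := by
  have : ∀ᵐ u : ℝ, ∀ i ∈ s, Integrable (fun y => g i (u - y) * f y) :=
    (Filter.eventually_all_finset s).2 fun i _ => conv_ex (hg i) hf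
  filter_upwards [this] with u hu
  simp only [conv]
  simp_rw [← integral_const_mul]
  rw [← integral_finsetSum s fun i hi => (hu i hi).const_mul (c i)]
  congr 1; ext y; rw [Finset.sum_mul]
  exact Finset.sum_congr rfl fun i _ => by ring

/-- `T i m` is `E^{*i} * F^{*m}`. -/
noncomputable def T (η θ : ℝ) : ℕ → ℕ → ℝ → ℝ
  | 0, 0 => fun _ => 0
  | i + 1, 0 => E η i
  | 0, m + 1 => F θ m
  | i + 1, m + 1 => fun u => θ / (η + θ) * T η θ (i + 1) m u + η / (η + θ) * T η θ i (m + 1) u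

lemma T_succ (η θ : ℝ) (i m : ℕ) : T η θ (i + 1) (m + 1) =
    fun u => θ / (η + θ) * T η θ (i + 1) m u + η / (η + θ) * T η θ i (m + 1) u := by
  rw [T]

lemma T_neg (η θ : ℝ) (i m : ℕ) (u : ℝ) : T η θ i m (-u) = T θ η m i u := by
  induction i generalizing m with
  | zero => cases m <;> simp [T, F]
  | succ i ih =>
    induction m with
    | zero => simp [T, F]
    | succ m ih2 =>
      rw [T_succ, T_succ]
      simp only [ih, ih2, add_comm θ η]
      ring

lemma T_integrable (η θ : ℝ) (h1 : 0 < η) (h2 : 0 < θ) (i m : ℕ) : Integrable (T η θ i m) := by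
  induction i generalizing m with
  | zero =>
    cases m
    · simp [T]
    · simpa [T] using F_integrable θ h2 _
  | succ i ih =>
    induction m with
    | zero => simpa [T] using E_integrable η h1 _
    | succ m ih2 =>
      rw [T_succ]
      exact (ih2.const_mul _).add ((ih _).const_mul _)

lemma T_conv_F (η θ : ℝ) (h1 : 0 < η) (h2 : 0 < θ) (i m : ℕ) (h : i + m ≠ 0) :
    conv (T η θ i m) (F θ 0) =ᵐ[volume] T η θ i (m + 1) := by
  induction i generalizing m with
  | zero =>
    cases m with
    | zero => simp at h
    | succ m =>
      refine Filter.Eventually.of_forall fun u => ?_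
      have := conv_neg (E θ m) (E θ 0) u
      rw [conv_EE] at this
      simp only [T]
      exact this
  | succ i ih =>
    induction m with
    | zero =>
      cases i with
      | zero =>
        have := conv_EF_zero η θ h1 h2
        rw [T_succ]
        simpa only [T] using this
      | succ i =>
        have h3 := ih 0 (by simp)
        filter_upwards [h3] with u hu
        rw [T_succ]
        simp only [T] at hu ⊢
        rw [conv_EF_succ η θ h1 h2, hu]
    | succ m ih2 =>
      have h3 := ih (m + 1) (by simp)
      have h4 := ih2 (by simp)
      have h5 := conv_lin_left (F_integrable θ h2 0) (T_integrable η θ h1 h2 (i + 1) m)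
        (T_integrable η θ h1 h2 i (m + 1)) (θ / (η + θ)) (η / (η + θ))
      rw [← T_succ η θ i m] at h5
      rw [T_succ η θ i (m + 1)]
      filter_upwards [h3, h4, h5] with u e3 e4 e5
      rw [e5, e4, e3]

lemma T_conv_E (η θ : ℝ) (h1 : 0 < η) (h2 : 0 < θ) (i m : ℕ) (h : i + m ≠ 0) :
    conv (T η θ i m) (E η 0) =ᵐ[volume] T η θ (i + 1) m := by
  have := ae_neg (T_conv_F θ η h2 h1 m i (by omega))
  filter_upwards [this] with u hu
  rw [T_neg, ← conv_neg] at hu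
  simpa [T_neg, F] using hu

/-- Coefficients. -/
noncomputable def U (a b : ℝ) (i m k : ℕ) : ℝ :=
  if m = 0 then (if k + 1 = i then 1 else 0)
  else if k < i then ((m + i - k - 2).choose (i - k - 1) : ℝ) * a ^ (i - k - 1) * b ^ m else 0

lemma U_rec (a b : ℝ) (i m k : ℕ) :
    U a b (i + 1) (m + 1) k = b * U a b (i + 1) m k + a * U a b i (m + 1) k := by
  rcases lt_trichotomy k i with h | h | h
  · obtain ⟨d, rfl⟩ : ∃ d, i = k + d + 1 := ⟨i - k - 1, by omega⟩
    have e1 : m + 1 + (k + d + 1 + 1) - k - 2 = m + d + 1 := by omega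
    have e2 : k + d + 1 + 1 - k - 1 = d + 1 := by omega
    have e3 : m + (k + d + 1 + 1) - k - 2 = m + d := by omega
    have e4 : m + 1 + (k + d + 1) - k - 2 = m + d := by omega
    have e5 : k + d + 1 - k - 1 = d := by omega
    have l1 : k < k + d + 1 + 1 := by omega
    have l2 : k < k + d + 1 := by omega
    have l3 : ¬ (k + 1 = k + d + 1 + 1) := by omega
    simp only [U, e1, e2, e3, e4, e5, l1, l2, l3, if_true, if_false, Nat.succ_ne_zero]
    rw [Nat.choose_succ_succ]
    rcases m with _ | m
    · simp; ring
    · simp only [Nat.succ_ne_zero, if_false]; push_cast; ring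
  · subst h
    rcases m with _ | m
    · simp [U]
    · simp [U]; ring
  · have l1 : ¬ (k < i + 1) := by omega
    have l2 : ¬ (k < i) := by omega
    have l3 : ¬ (k = i) := by omega
    simp [U, l1, l2, l3]

lemma U_zero (a b : ℝ) (m k : ℕ) : U a b 0 m k = 0 := by simp [U]

lemma T_eq (η θ : ℝ) (N i m : ℕ) (hi : i ≤ N) (hm : m ≤ N) (u : ℝ) :
    T η θ i m u = ∑ k ∈ Finset.range N, U (η / (η + θ)) (θ / (η + θ)) i m k * E η k u
      + ∑ k ∈ Finset.range N, U (θ / (η + θ)) (η / (η + θ)) m i k * F θ k u := by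
  induction i generalizing m with
  | zero =>
    cases m with
    | zero => simp [T, U]
    | succ m => 
      simp only [U_zero, T]
      simp only [U, if_true]
      have : m < N := by omega
      simp [this]
  | succ i ih =>
    induction m with
    | zero =>
      simp only [U_zero, T]
      simp only [U, if_true]
      have : i < N := by omega
      simp [this]
    | succ m ih2 =>
      rw [T_succ]
      simp only [U_rec]
      rw [ih2 (by omega), ih (m + 1) (by omega) hm]
      simp only [add_mul, Finset.sum_add_distrib, mul_add, Finset.mul_sum, mul_assoc]
      ring

lemma kou_ae (p q η₁ η₂ : ℝ) : kouDensity p q η₁ η₂ =ᵐ[volume]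
    fun u => p * E η₁ 0 u + q * F η₂ 0 u := by
  have h0 : ∀ᵐ u : ℝ, u ≠ 0 := by simp [ae_iff]
  filter_upwards [h0] with u hu
  simp only [F, E, kouDensity]
  rcases lt_or_gt_of_ne hu with h | h
  · have a1 : ¬ (0 ≤ u) := by linarith
    have a2 : 0 ≤ -u := by linarith
    simp only [a1, a2, if_true, if_false]
    simp; ring
  · have a1 : 0 ≤ u := by linarith
    have a2 : ¬ (0 ≤ -u) := by linarith
    simp only [a1, a2, if_true, if_false]
    simp; ring

lemma convPow_ae (p q η₁ η₂ : ℝ) (h1 : 0 < η₁) (h2 : 0 < η₂) (n : ℕ) :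
    convPow (kouDensity p q η₁ η₂) (n + 1) =ᵐ[volume] fun u =>
      ∑ x ∈ Finset.HasAntidiagonal.antidiagonal (n + 1),
        ((n + 1).choose x.1 : ℝ) * (p ^ x.1 * q ^ x.2 * T η₁ η₂ x.1 x.2 u) := by
  induction n with
  | zero =>
    filter_upwards [kou_ae p q η₁ η₂] with u hu
    simp only [convPow, hu]
    simp [Finset.Nat.antidiagonal_succ, T]; ring
  | succ n ih =>
    have key : ∀ u, convPow (kouDensity p q η₁ η₂) (n + 1 + 1) u =
        conv (fun u => ∑ x ∈ Finset.HasAntidiagonal.antidiagonal (n + 1),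
          (((n + 1).choose x.1 : ℝ) * (p ^ x.1 * q ^ x.2)) * T η₁ η₂ x.1 x.2 u)
          (fun u => p * E η₁ 0 u + q * F η₂ 0 u) u := by
      intro u
      simp only [convPow]
      refine conv_congr (ih.trans ?_) (kou_ae p q η₁ η₂) u
      refine Filter.Eventually.of_forall fun u => ?_
      exact Finset.sum_congr rfl fun x _ => by ring
    have iE := E_integrable η₁ h1 0
    have iF := F_integrable η₂ h2 0
    have hs := conv_sum_left ((iE.const_mul p).add (iF.const_mul q))
      (Finset.HasAntidiagonal.antidiagonal (n + 1))
      (fun x : ℕ × ℕ => ((n + 1).choose x.1 : ℝ) * (p ^ x.1 * q ^ x.2))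
      (fun x => T η₁ η₂ x.1 x.2) (fun x => T_integrable η₁ η₂ h1 h2 x.1 x.2)
    have ht : ∀ᵐ u : ℝ, ∀ x ∈ Finset.HasAntidiagonal.antidiagonal (n + 1),
        conv (T η₁ η₂ x.1 x.2) (fun u => p * E η₁ 0 u + q * F η₂ 0 u) u =
          p * T η₁ η₂ (x.1 + 1) x.2 u + q * T η₁ η₂ x.1 (x.2 + 1) u := by
      refine (Filter.eventually_all_finset _).2 fun x hx => ?_
      have hx' : x.1 + x.2 ≠ 0 := by
        have := Finset.HasAntidiagonal.mem_antidiagonal.1 hx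
        omega
      filter_upwards [conv_lin_right (T_integrable η₁ η₂ h1 h2 x.1 x.2) iE iF p q,
        T_conv_E η₁ η₂ h1 h2 x.1 x.2 hx', T_conv_F η₁ η₂ h1 h2 x.1 x.2 hx'] with u e1 e2 e3
      rw [e1, e2, e3]
    filter_upwards [hs, ht] with u es et
    rw [key u]
    refine es.trans ?_
    rw [Finset.sum_antidiagonal_choose_succ_mul
      (fun i m => p ^ i * q ^ m * T η₁ η₂ i m u) (n + 1), ← Finset.sum_add_distrib]
    refine Finset.sum_congr rfl fun x hx => ?_
    have e := et x hx
    have hc : (n + 1).choose x.2 = (n + 1).choose x.1 := by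
      rw [← Finset.HasAntidiagonal.mem_antidiagonal.1 hx]
      exact (Nat.choose_symm_add).symm
    refine (congrArg _ e).trans ?_
    rw [hc]
    ring

lemma coefP (p q η₁ η₂ : ℝ) (n k : ℕ) (hk : k < n) :
    ∑ x ∈ Finset.HasAntidiagonal.antidiagonal n, (n.choose x.1 : ℝ) * (p ^ x.1 * q ^ x.2 *
      U (η₁ / (η₁ + η₂)) (η₂ / (η₁ + η₂)) x.1 x.2 k) = kouP p q η₁ η₂ n (k + 1) := by
  rw [Finset.Nat.sum_antidiagonal_eq_sum_range_succ_mk, Finset.sum_range_succ]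
  by_cases h : k + 1 = n
  · have : ∀ i ∈ Finset.range n, (n.choose i : ℝ) * (p ^ i * q ^ (n - i) *
      U (η₁ / (η₁ + η₂)) (η₂ / (η₁ + η₂)) i (n - i) k) = 0 := by
      intro i hi
      have := Finset.mem_range.1 hi
      have a1 : n - i ≠ 0 := by omega
      have a2 : ¬ (k < i) := by omega
      simp [U, a1, a2]
    rw [Finset.sum_eq_zero this]
    simp [kouP, U, h]
  · have e0 : U (η₁ / (η₁ + η₂)) (η₂ / (η₁ + η₂)) n (n - n) k = 0 := by simp [U, h]
    simp only [e0, mul_zero, add_zero, kouP, h, if_false]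
    symm
    apply Finset.sum_subset_zero_on_sdiff
    · intro i hi
      simp only [Finset.mem_Icc, Finset.mem_range] at *
      omega
    · intro i hi
      simp only [Finset.mem_sdiff, Finset.mem_Icc, Finset.mem_range] at hi
      have a1 : n - i ≠ 0 := by omega
      have a2 : ¬ (k < i) := by omega
      simp [U, a1, a2]
    · intro i hi
      simp only [Finset.mem_Icc] at hi
      have a1 : n - i ≠ 0 := by omega
      have a2 : k < i := by omega
      simp only [U, a1, a2, if_true, if_false]
      have e1 : n - i + i - k - 2 = n - (k + 1) - 1 := by omega
      have e2 : i - k - 1 = i - (k + 1) := by omega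
      rw [e1, e2]; ring

lemma kouQ_eq (p q η₁ η₂ : ℝ) (n k : ℕ) : kouQ p q η₁ η₂ n k = kouP q p η₂ η₁ n k := by
  simp only [kouQ, kouP, add_comm η₂ η₁]
  split_ifs
  · rfl
  · exact Finset.sum_congr rfl fun i _ => by ring

lemma coefQ (p q η₁ η₂ : ℝ) (n k : ℕ) (hk : k < n) :
    ∑ x ∈ Finset.HasAntidiagonal.antidiagonal n, (n.choose x.1 : ℝ) * (p ^ x.1 * q ^ x.2 *
      U (η₂ / (η₁ + η₂)) (η₁ / (η₁ + η₂)) x.2 x.1 k) = kouQ p q η₁ η₂ n (k + 1) := by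
  rw [kouQ_eq, ← coefP q p η₂ η₁ n k hk, ← Finset.Nat.sum_antidiagonal_swap, add_comm η₂ η₁]
  refine Finset.sum_congr rfl fun x hx => ?_
  have hc : n.choose x.2 = n.choose x.1 := by
    rw [← Finset.HasAntidiagonal.mem_antidiagonal.1 hx]
    exact (Nat.choose_symm_add).symm
  simp only [Prod.fst_swap, Prod.snd_swap, hc]
  ring

end Kou

/-- Closed form of the n-fold convolution of the Kou double-exponential
density. -/
theorem kou_convPow (p q η₁ η₂ : ℝ) (hp : 0 ≤ p) (hq : 0 ≤ q) (hpq : p + q = 1)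
    (h1 : 0 < η₁) (h2 : 0 < η₂) (n : ℕ) (hn : 1 ≤ n) :
    ∀ᵐ u : ℝ ∂volume,
      convPow (kouDensity p q η₁ η₂) n u =
        if 0 ≤ u then
          Real.exp (-η₁ * u) * ∑ k ∈ Finset.Icc 1 n,
            kouP p q η₁ η₂ n k * η₁ ^ k * u ^ (k - 1) / (k - 1).factorial
        else
          Real.exp (η₂ * u) * ∑ k ∈ Finset.Icc 1 n,
            kouQ p q η₁ η₂ n k * η₂ ^ k * (-u) ^ (k - 1) / (k - 1).factorial := by
  obtain ⟨n, rfl⟩ : ∃ m, n = m + 1 := ⟨n - 1, by omega⟩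
  have h0 : ∀ᵐ u : ℝ, u ≠ 0 := by simp [ae_iff]
  filter_upwards [Kou.convPow_ae p q η₁ η₂ h1 h2 n, h0] with u hu hu0
  rw [hu]
  have hT : ∑ x ∈ Finset.HasAntidiagonal.antidiagonal (n + 1),
        ((n + 1).choose x.1 : ℝ) * (p ^ x.1 * q ^ x.2 * Kou.T η₁ η₂ x.1 x.2 u) =
      ∑ k ∈ Finset.range (n + 1), kouP p q η₁ η₂ (n + 1) (k + 1) * Kou.E η₁ k u
      + ∑ k ∈ Finset.range (n + 1), kouQ p q η₁ η₂ (n + 1) (k + 1) * Kou.F η₂ k u := by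
    have e1 : ∀ k ∈ Finset.range (n + 1), kouP p q η₁ η₂ (n + 1) (k + 1) * Kou.E η₁ k u = _ :=
      fun k hk => by rw [← Kou.coefP p q η₁ η₂ (n + 1) k (Finset.mem_range.1 hk)]
    have e2 : ∀ k ∈ Finset.range (n + 1), kouQ p q η₁ η₂ (n + 1) (k + 1) * Kou.F η₂ k u = _ :=
      fun k hk => by rw [← Kou.coefQ p q η₁ η₂ (n + 1) k (Finset.mem_range.1 hk)]
    rw [Finset.sum_congr rfl e1, Finset.sum_congr rfl e2]
    simp only [Finset.sum_mul]
    rw [Finset.sum_comm, Finset.sum_comm (s := Finset.range (n + 1)), ← Finset.sum_add_distrib]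
    refine Finset.sum_congr rfl fun x hx => ?_
    have hx' := Finset.HasAntidiagonal.mem_antidiagonal.1 hx
    rw [Kou.T_eq η₁ η₂ (n + 1) x.1 x.2 (by omega) (by omega)]
    simp only [mul_add, Finset.mul_sum, mul_assoc]
  rw [hT]
  have hI : Finset.Icc 1 (n + 1) = Finset.Ico (0 + 1) (n + 1 + 1) := by
    ext; simp [Nat.lt_succ_iff]
  simp only [hI, ← Finset.sum_Ico_add', Nat.Ico_zero_eq_range, Nat.add_sub_cancel, Kou.F, Kou.E,
    Finset.mul_sum]
  rcases lt_or_gt_of_ne hu0 with h | h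
  · have a1 : ¬ (0 ≤ u) := by linarith
    have a2 : 0 ≤ -u := by linarith
    simp only [a1, a2, if_true, if_false, mul_zero, Finset.sum_const_zero, zero_add, neg_mul_neg]
    exact Finset.sum_congr rfl fun k _ => by ring
  · have a1 : 0 ≤ u := by linarith
    have a2 : ¬ (0 ≤ -u) := by linarith
    simp only [a1, a2, if_true, if_false, mul_zero, Finset.sum_const_zero, add_zero]
    exact Finset.sum_congr rfl fun k _ => by ring
end

section
/- N-fold convolution of the uniform density (density of the sum of n i.i.d. uniform random variables, used for log-uniform jump amplitudes): let a < b be real numbers and let f(y) = (1/(b−a)) · 1_{[a,b]}(y). Then for every n ≥ 1 the n-fold convolution f^{*n} satisfies, for almost every u ∈ ℝ: if n a ≤ u ≤ n b then f^{*n}(u) = ( Σ_{i=0}^{ñ(n,u)} (−1)^{i} C(n,i) (u − n a − i(b−a))^{n−1} ) / ( (n−1)! (b−a)^{n} ), where ñ(n,u) = ⌊(u − n a)/(b−a)⌋; and f^{*n}(u) = 0 if u < n a or u > n b. -/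
open Real MeasureTheory

/-- truncated power -/
noncomputable def tpow (n : ℕ) (x : ℝ) : ℝ := if 0 ≤ x then x ^ n else 0

lemma tpow_mono (n : ℕ) : Monotone (tpow n) := by
  intro x y hxy
  unfold tpow
  split_ifs with h1 h2 h2
  · gcongr
  · linarith
  · positivity
  · exact le_rfl

lemma tpow_succ_eq (n : ℕ) (x : ℝ) : tpow (n + 1) x = (max x 0) ^ (n + 1) := by
  unfold tpow
  split_ifs with h
  · rw [max_eq_left h]
  · rw [max_eq_right (by linarith)]; simp

lemma tpow_succ_cont (n : ℕ) : Continuous (tpow (n + 1)) := by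
  have : tpow (n + 1) = fun x => (max x 0) ^ (n + 1) := funext (tpow_succ_eq n)
  rw [this]; fun_prop

lemma tpow_deriv (n : ℕ) (x : ℝ) :
    HasDerivWithinAt (fun x => tpow (n + 1) x / (n + 1)) (tpow n x) (Set.Ioi x) x := by
  have hn : (n + 1 : ℝ) ≠ 0 := by positivity
  by_cases h : 0 ≤ x
  · have h1 : HasDerivAt (fun x : ℝ => x ^ (n + 1) / (n + 1)) (tpow n x) x := by
      have := (hasDerivAt_pow (n + 1) x).div_const ((n : ℝ) + 1)
      unfold tpow
      rw [if_pos h]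
      have e : ((n + 1 : ℕ) : ℝ) * x ^ (n + 1 - 1) / ((n : ℝ) + 1) = x ^ n := by
        push_cast
        field_simp
      rwa [e] at this
    refine h1.hasDerivWithinAt.congr ?_ ?_
    · intro y hy
      have : 0 ≤ y := h.trans (le_of_lt hy)
      simp [tpow, this]
    · simp [tpow, h]
  · have h1 : HasDerivAt (fun x => tpow (n + 1) x / (n + 1)) 0 x := by
      refine (hasDerivAt_const x (0 : ℝ)).congr_of_eventuallyEq ?_
      filter_upwards [Iio_mem_nhds (not_le.1 h)] with y hy
      have hy' : ¬ (0 ≤ y) := not_le.2 (Set.mem_Iio.1 hy)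
      simp [tpow, hy']
    have h2 : tpow n x = 0 := by simp [tpow, h]
    rw [h2]; exact h1.hasDerivWithinAt

lemma tpow_integral (n : ℕ) (s t : ℝ) :
    ∫ x in s..t, tpow n x = tpow (n + 1) t / (n + 1) - tpow (n + 1) s / (n + 1) :=
  intervalIntegral.integral_eq_sub_of_hasDeriv_right
    (f := fun x => tpow (n + 1) x / (n + 1))
    ((tpow_succ_cont n).div_const _).continuousOn (fun x _ => tpow_deriv n x)
    (tpow_mono n).intervalIntegrable

/-- the closed form with truncated powers, for index `m + 1` -/
noncomputable def closedG (a h : ℝ) (m : ℕ) (u : ℝ) : ℝ :=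
  (∑ i ∈ Finset.range (m + 2), ((m + 1).choose i : ℝ) *
    ((-1 : ℝ) ^ i * tpow m (u - (m + 1) * a - i * h))) / (m.factorial * h ^ (m + 1))

lemma closedG_step (a h : ℝ) (hh : 0 < h) (m : ℕ) (u : ℝ) :
    (∫ x in (u - (a + h))..(u - a), closedG a h m x) / h = closedG a h (m + 1) u := by
  unfold closedG
  rw [intervalIntegral.integral_div, intervalIntegral.integral_finsetSum]
  · simp only [intervalIntegral.integral_const_mul]
    have key : ∀ i : ℕ, ∫ x in (u - (a + h))..(u - a), tpow m (x - (m + 1) * a - i * h)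
        = tpow (m + 1) (u - (m + 2) * a - i * h) / (m + 1)
          - tpow (m + 1) (u - (m + 2) * a - (i + 1 : ℕ) * h) / (m + 1) := by
      intro i
      have e : ∀ x : ℝ, x - (m + 1) * a - i * h = x - ((m + 1) * a + i * h) := fun x => by ring
      simp only [e]
      rw [intervalIntegral.integral_comp_sub_right (fun x => tpow m x), tpow_integral]
      congr 3
      · ring
      · push_cast; ring
    simp only [key]
    have hs := Finset.sum_choose_succ_mul
      (fun i _ => (-1 : ℝ) ^ i * tpow (m + 1) (u - (m + 2) * a - i * h)) (m + 1)
    have e2 : ((m + 1 : ℕ) : ℝ) + 1 = m + 2 := by push_cast; ring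
    rw [e2, show m + 1 + 2 = m + 1 + 1 + 1 from rfl, hs, ← Finset.sum_add_distrib,
      div_div, div_eq_div_iff (by positivity) (by positivity), Finset.sum_mul, Finset.sum_mul]
    refine Finset.sum_congr rfl fun i _ => ?_
    have : (m + 1 : ℝ) ≠ 0 := by positivity
    rw [Nat.factorial_succ]
    push_cast
    field_simp
    ring
  · intro i _
    refine IntervalIntegrable.const_mul (IntervalIntegrable.const_mul ?_ _) _
    apply Monotone.intervalIntegrable
    intro x y hxy
    exact tpow_mono m (by linarith)

lemma conv_unif (a b : ℝ) (hab : a < b) (g : ℝ → ℝ) (u : ℝ) :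
    conv g (fun y => if a ≤ y ∧ y ≤ b then 1 / (b - a) else 0) u
      = (∫ x in (u - (a + (b - a)))..(u - a), g x) / (b - a) := by
  unfold conv
  have : (fun y => g (u - y) * (if a ≤ y ∧ y ≤ b then 1 / (b - a) else 0))
      = (Set.Icc a b).indicator (fun y => g (u - y) / (b - a)) := by
    funext y
    by_cases h : a ≤ y ∧ y ≤ b
    · simp [Set.indicator, h, div_eq_mul_inv]
    · simp only [Set.indicator, Set.mem_Icc, h, if_false, mul_zero]
  rw [this, integral_indicator measurableSet_Icc, integral_Icc_eq_integral_Ioc,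
    ← intervalIntegral.integral_of_le hab.le, intervalIntegral.integral_div,
    intervalIntegral.integral_comp_sub_left]
  congr 3
  ring

lemma convPow_ae (a b : ℝ) (hab : a < b) (m : ℕ) :
    ∀ᵐ u : ℝ ∂volume,
      convPow (fun y => if a ≤ y ∧ y ≤ b then 1 / (b - a) else 0) (m + 1) u
        = closedG a (b - a) m u := by
  have hh : 0 < b - a := sub_pos.2 hab
  induction m with
  | zero =>
    filter_upwards [Measure.ae_ne volume b] with u hu
    simp only [convPow, closedG, Finset.sum_range_succ, tpow]
    simp only [Finset.range_zero, Finset.sum_empty]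
    by_cases h1 : a ≤ u
    · rcases lt_or_gt_of_ne hu with h2 | h2
      · have : ¬ (b ≤ u) := not_le.2 h2
        simp [h1, h2.le, this]
      · have : ¬ (u ≤ b) := not_le.2 h2
        simp [h1, h2.le, this]
    · have : ¬ (b ≤ u) := fun h => h1 (by linarith)
      simp [h1, this]
  | succ m ih =>
    refine Filter.Eventually.of_forall fun u => ?_
    rw [← closedG_step a (b - a) hh]
    show conv _ _ u = _
    rw [conv_unif a b hab]
    congr 1
    refine intervalIntegral.integral_congr_ae ?_
    filter_upwards [ih] with x hx _
    exact hx

lemma alt_sum_zero (h x : ℝ) (hh : h ≠ 0) (m : ℕ) :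
    ∑ i ∈ Finset.range (m + 2), ((m + 1).choose i : ℝ) * ((-1 : ℝ) ^ i * (x - i * h) ^ m) = 0 := by
  have h1 := congr_fun (fwdDiff_iter_pow_eq_zero_of_lt (R := ℝ) (Nat.lt_succ_self m)) (-x / h)
  rw [fwdDiff_iter_eq_sum_shift] at h1
  have h2 : ∑ i ∈ Finset.range (m + 2), ((m + 1).choose i : ℝ) * ((-1 : ℝ) ^ i * (x - i * h) ^ m)
      = (-1) ^ (m + 1) * (-h) ^ m * 0 := by
    rw [show (0 : ℝ) = (0 : ℝ → ℝ) (-x / h) from rfl, ← h1, Finset.mul_sum]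
    refine Finset.sum_congr rfl fun i hi => ?_
    have hi' : i ≤ m + 1 := by have := Finset.mem_range.1 hi; omega
    have e1 : x - i * h = (-h) * (-x / h + i • (1 : ℝ)) := by
      simp only [nsmul_eq_mul]; field_simp; ring
    have e2 : (-1 : ℝ) ^ i = (-1) ^ (m + 1) * (-1) ^ (m + 1 - i) := by
      obtain ⟨k, hk⟩ := Nat.exists_eq_add_of_le hi'
      rw [hk, Nat.add_sub_cancel_left, pow_add, mul_assoc, ← mul_pow]
      simp
    rw [e1, mul_pow, e2]
    simp only [zsmul_eq_mul, Nat.succ_eq_add_one]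
    push_cast
    ring
  rw [h2, mul_zero]

lemma closedG_eq (a b : ℝ) (hab : a < b) (m : ℕ) (u : ℝ) (hu : u ≠ (m + 1) * b) :
    closedG a (b - a) m u =
      if ((m : ℝ) + 1) * a ≤ u ∧ u ≤ ((m : ℝ) + 1) * b then
          (∑ i ∈ Finset.range ((⌊(u - (m + 1) * a) / (b - a)⌋).toNat + 1),
              (-1 : ℝ) ^ i * ((m + 1).choose i : ℝ)
                * (u - (m + 1) * a - i * (b - a)) ^ m)
            / (m.factorial * (b - a) ^ (m + 1))
        else 0 := by
  have hh : 0 < b - a := sub_pos.2 hab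
  unfold closedG
  split_ifs with h
  · congr 1
    obtain ⟨h1, h2⟩ := h
    have h0 : 0 ≤ (u - (m + 1) * a) / (b - a) := div_nonneg (by linarith) hh.le
    have hfl : (⌊(u - (m + 1) * a) / (b - a)⌋).toNat = ⌊(u - (m + 1) * a) / (b - a)⌋₊ := rfl
    rw [hfl]
    set N := ⌊(u - (m + 1) * a) / (b - a)⌋₊ with hN
    have hNm : N < m + 1 := by
      rw [hN, Nat.floor_lt h0, div_lt_iff₀ hh]
      have := lt_of_le_of_ne h2 hu
      push_cast
      linarith
    symm
    rw [← Finset.sum_subset (s₁ := Finset.range (N + 1)) (s₂ := Finset.range (m + 2))]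
    · refine Finset.sum_congr rfl fun i hi => ?_
      have hi' : i ≤ N := by have := Finset.mem_range.1 hi; omega
      have : (i : ℝ) ≤ (u - (m + 1) * a) / (b - a) := (Nat.le_floor_iff h0).1 hi'
      rw [le_div_iff₀ hh] at this
      rw [tpow, if_pos (by linarith)]
      ring
    · intro i hi
      have := Finset.mem_range.1 hi
      exact Finset.mem_range.2 (by omega)
    · intro i _ hi
      have hi' : N < i := by
        by_contra hc
        exact hi (Finset.mem_range.2 (Nat.lt_succ_of_le (not_lt.1 hc)))
      have := (Nat.floor_lt h0).1 hi'
      rw [div_lt_iff₀ hh] at this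
      rw [tpow, if_neg (by linarith)]
      simp
  · rw [div_eq_zero_iff]
    left
    by_cases h1 : ((m : ℝ) + 1) * a ≤ u
    · have h2 : ((m : ℝ) + 1) * b < u := by
        by_contra h2
        exact h ⟨h1, not_lt.1 h2⟩
      rw [← alt_sum_zero (b - a) (u - (m + 1) * a) hh.ne' m]
      refine Finset.sum_congr rfl fun i hi => ?_
      have hi' : (i : ℝ) ≤ m + 1 := by
        have := Finset.mem_range.1 hi
        exact_mod_cast (by omega : i ≤ m + 1)
      have := mul_le_mul_of_nonneg_right hi' hh.le
      rw [tpow, if_pos (by linarith)]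
    · refine Finset.sum_eq_zero fun i _ => ?_
      have : 0 ≤ (i : ℝ) * (b - a) := by positivity
      rw [tpow, if_neg (by linarith)]
      simp

/-- Closed form of the n-fold convolution of the uniform density on [a,b]
(density of the sum of n i.i.d. uniform random variables). -/
theorem uniform_convPow (a b : ℝ) (hab : a < b) (n : ℕ) (hn : 1 ≤ n) :
    ∀ᵐ u : ℝ ∂volume,
      convPow (fun y => if a ≤ y ∧ y ≤ b then 1 / (b - a) else 0) n u =
        if (n : ℝ) * a ≤ u ∧ u ≤ (n : ℝ) * b then
          (∑ i ∈ Finset.range ((⌊(u - n * a) / (b - a)⌋).toNat + 1),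
              (-1 : ℝ) ^ i * (n.choose i : ℝ)
                * (u - n * a - i * (b - a)) ^ (n - 1))
            / ((n - 1).factorial * (b - a) ^ n)
        else 0 := by
  obtain ⟨m, rfl⟩ : ∃ m, n = m + 1 := ⟨n - 1, by omega⟩
  filter_upwards [convPow_ae a b hab m, Measure.ae_ne volume (((m : ℝ) + 1) * b)] with u h1 h2
  rw [h1, closedG_eq a b hab m u h2]
  push_cast
  simp only [Nat.add_sub_cancel]
end

section
/- Uniform-in-x bound on Λ Γ of the Black–Scholes price (deterministic case n = 1 of the key estimate used in the error bounds): for every 0 ≤ t < T, every x ∈ ℝ and every y > 0, | ∂_x (∂²_{xx} − ∂_x) BS(t,x,y) | = (e^x/(y√(2πτ))) exp(−d₊²/2) · |1 − d₊/(y√τ)| ≤ K e^{−rτ} e^{−1/2} / ( √(2π) · y² τ ), where τ = T − t and d₊ = (x − log K + (r + y²/2)τ)/(y√τ). In particular the bound does not depend on x. -/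
open Real MeasureTheory

/-- Standard normal density. -/
noncomputable def auxDens (x : ℝ) : ℝ :=
  (Real.sqrt (2 * Real.pi))⁻¹ * Real.exp (-x ^ 2 / 2)

lemma aux_hasDerivAt_cdf (x : ℝ) : HasDerivAt stdNormalCDF (auxDens x) x := by
  have hcont : Continuous auxDens := by unfold auxDens; fun_prop
  have hint : Integrable auxDens := by
    have h := (integrable_exp_neg_mul_sq (b := 1 / 2) (by norm_num)).const_mul
      (Real.sqrt (2 * Real.pi))⁻¹
    refine h.congr (Filter.Eventually.of_forall fun t => ?_)
    simp only [auxDens]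
    congr 2
    ring
  have heq : stdNormalCDF = fun u => stdNormalCDF 0 + ∫ t in (0 : ℝ)..u, auxDens t := by
    funext u
    rw [← intervalIntegral.integral_Iic_sub_Iic hint.integrableOn hint.integrableOn]
    simp only [stdNormalCDF, auxDens]
    ring
  rw [heq]
  exact (intervalIntegral.integral_hasDerivAt_right hint.intervalIntegrable
    (hcont.stronglyMeasurableAtFilter _ _) hcont.continuousAt).const_add _

lemma aux_hasDerivAt_dens (x : ℝ) : HasDerivAt auxDens (-x * auxDens x) x := by
  have h1 : HasDerivAt (fun u : ℝ => -u ^ 2 / 2) (-x) x := by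
    have := ((hasDerivAt_pow 2 x).neg).div_const 2
    exact this.congr_deriv (by norm_num; ring)
  have h := h1.exp.const_mul (Real.sqrt (2 * Real.pi))⁻¹
  exact h.congr_deriv (by unfold auxDens; ring)

lemma aux_mul_exp_le (d : ℝ) : |d| * Real.exp (-d ^ 2 / 2) ≤ Real.exp (-(1 : ℝ) / 2) := by
  have h1 : |d| ≤ Real.exp ((d ^ 2 - 1) / 2) := by
    have h2 := Real.add_one_le_exp ((d ^ 2 - 1) / 2)
    have h3 : |d| ^ 2 = d ^ 2 := sq_abs d
    nlinarith [sq_nonneg (|d| - 1)]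
  calc |d| * Real.exp (-d ^ 2 / 2)
      ≤ Real.exp ((d ^ 2 - 1) / 2) * Real.exp (-d ^ 2 / 2) := by gcongr
    _ = Real.exp (-(1 : ℝ) / 2) := by
      rw [← Real.exp_add]
      congr 1
      ring

/-- Uniform-in-x bound on Λ Γ of the Black–Scholes price:
|∂ₓ Γ BS(t,x,y)| = (e^x/(y√(2πτ)))e^{−d₊²/2}|1 − d₊/(y√τ)|
≤ K e^{−rτ} e^{−1/2}/(√(2π) y² τ). -/
theorem lambda_gamma_bs_bound (T K r : ℝ) (hT : 0 < T) (hK : 0 < K)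
    (t x y : ℝ) (ht0 : 0 ≤ t) (htT : t < T) (hy : 0 < y) :
    |deriv (GammaOp (fun x' => BS T K r t x' y)) x|
        = Real.exp x / (y * Real.sqrt (2 * Real.pi * (T - t)))
            * Real.exp (-(dPlus T K r t x y) ^ 2 / 2)
            * |1 - dPlus T K r t x y / (y * Real.sqrt (T - t))|
    ∧ |deriv (GammaOp (fun x' => BS T K r t x' y)) x|
        ≤ K * Real.exp (-r * (T - t)) * Real.exp (-(1 : ℝ) / 2)
            / (Real.sqrt (2 * Real.pi) * (y ^ 2 * (T - t))) := by
  have hτ : 0 < T - t := sub_pos.mpr htT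
  have hsτ : 0 < Real.sqrt (T - t) := Real.sqrt_pos.mpr hτ
  have hsq : Real.sqrt (T - t) ^ 2 = T - t := Real.sq_sqrt hτ.le
  have hs : 0 < y * Real.sqrt (T - t) := mul_pos hy hsτ
  have hs2 : (y * Real.sqrt (T - t)) ^ 2 = y ^ 2 * (T - t) := by rw [mul_pow, hsq]
  obtain ⟨s, hsdef⟩ : ∃ s, s = y * Real.sqrt (T - t) := ⟨_, rfl⟩
  rw [← hsdef] at hs hs2
  have hp2 : 0 < Real.sqrt (2 * Real.pi) := by positivity
  have hdm : ∀ u, dMinus T K r t u y = dPlus T K r t u y - s := by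
    intro u
    simp only [dMinus, dPlus, ← hsdef]
    field_simp
    rw [hs2]
    ring
  have hdp : ∀ u, s * dPlus T K r t u y
      = u - Real.log K + (r + y ^ 2 / 2) * (T - t) := by
    intro u
    simp only [dPlus, ← hsdef]
    field_simp
  have hdp' : ∀ u, HasDerivAt (fun v => dPlus T K r t v y) (1 / s) u := by
    intro u
    simp only [dPlus, ← hsdef]
    exact (((hasDerivAt_id u).sub_const _).add_const _).div_const s
  have hdm' : ∀ u, HasDerivAt (fun v => dMinus T K r t v y) (1 / s) u := by
    intro u
    simp only [dMinus, ← hsdef]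
    exact (((hasDerivAt_id u).sub_const _).add_const _).div_const s
  have hid : ∀ u, Real.exp u * auxDens (dPlus T K r t u y)
      = K * Real.exp (-r * (T - t)) * auxDens (dMinus T K r t u y) := by
    intro u
    have h1 : K * Real.exp (-r * (T - t)) = Real.exp (Real.log K + -r * (T - t)) := by
      rw [Real.exp_add, Real.exp_log hK]
    rw [h1, hdm u]
    unfold auxDens
    rw [mul_left_comm, mul_left_comm (Real.exp (Real.log K + -r * (T - t))),
      ← Real.exp_add, ← Real.exp_add]
    congr 2
    linear_combination (-1 : ℝ) * hdp u + (1 / 2 : ℝ) * hs2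
  have hd1 : deriv (fun x' => BS T K r t x' y)
      = fun u => Real.exp u * stdNormalCDF (dPlus T K r t u y) := by
    funext u
    have ha := (Real.hasDerivAt_exp u).mul ((aux_hasDerivAt_cdf _).comp u (hdp' u))
    have hb := ((aux_hasDerivAt_cdf _).comp u (hdm' u)).const_mul
      (K * Real.exp (-r * (T - t)))
    refine ((ha.sub hb).congr_deriv ?_).deriv
    simp only [Function.comp]
    linear_combination (1 / s) * hid u
  have hd2 : deriv (fun u => Real.exp u * stdNormalCDF (dPlus T K r t u y))
      = fun u => Real.exp u * stdNormalCDF (dPlus T K r t u y)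
        + Real.exp u * auxDens (dPlus T K r t u y) * (1 / s) := by
    funext u
    have ha := (Real.hasDerivAt_exp u).mul ((aux_hasDerivAt_cdf _).comp u (hdp' u))
    refine (ha.congr_deriv ?_).deriv
    simp only [Function.comp]
    ring
  have hG : GammaOp (fun x' => BS T K r t x' y)
      = fun u => K * Real.exp (-r * (T - t)) * (1 / s) * auxDens (dMinus T K r t u y) := by
    funext u
    simp only [GammaOp, hd1, hd2]
    linear_combination (1 / s) * hid u
  have hD : deriv (GammaOp (fun x' => BS T K r t x' y)) x
      = K * Real.exp (-r * (T - t)) * (1 / s) *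
        (-dMinus T K r t x y * auxDens (dMinus T K r t x y) * (1 / s)) := by
    rw [hG]
    exact (((aux_hasDerivAt_dens _).comp x (hdm' x)).const_mul _).deriv
  constructor
  · have hD2 : deriv (GammaOp (fun x' => BS T K r t x' y)) x
        = (Real.exp x * auxDens (dPlus T K r t x y) * (1 / s))
          * (1 - dPlus T K r t x y / s) := by
      rw [hD, hid x, hdm x]
      field_simp
      ring
    have hden : 0 < auxDens (dPlus T K r t x y) := by unfold auxDens; positivity
    rw [hD2, abs_mul, abs_of_pos (by positivity), ← hsdef,
      Real.sqrt_mul (by positivity) (T - t)]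
    congr 1
    rw [mul_left_comm y, ← hsdef]
    unfold auxDens
    field_simp
  · rw [hD, ← hs2]
    have h := aux_mul_exp_le (dMinus T K r t x y)
    have hc : 0 < K * Real.exp (-r * (T - t)) / (Real.sqrt (2 * Real.pi) * s ^ 2) := by
      positivity
    have e : K * Real.exp (-r * (T - t)) * (1 / s) *
        (-dMinus T K r t x y * auxDens (dMinus T K r t x y) * (1 / s))
        = K * Real.exp (-r * (T - t)) / (Real.sqrt (2 * Real.pi) * s ^ 2)
          * (Real.exp (-(dMinus T K r t x y) ^ 2 / 2) * -dMinus T K r t x y) := by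
      unfold auxDens
      field_simp
    rw [e, abs_mul, abs_of_pos hc, abs_mul, abs_of_pos (Real.exp_pos _), abs_neg,
      mul_comm (Real.exp _) |_|]
    refine (mul_le_mul_of_nonneg_left h hc.le).trans (le_of_eq ?_)
    ring
end
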